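/- Let λ, σ, τ > 0 be real, p, q complex with Re(p) > 0, Re(q) > 0, and η₁, η₂ complex with Re(η₁) > 0, Re(η₂) > 0. Then B_{p,q}^{λ;σ,τ}(η₁, η₂) = Σ_{n=0}^∞ B_{p,q}^{λ;σ,τ}(η₁+n, η₂+1), i.e. the series on the right converges and its sum equals the extended beta function on the left. -/

import Mathlib

open MeasureTheory Set Complex

/-- The classical Mittag-Leffler function `E_λ(x) = Σ xⁿ / Γ(λn+1)`. -/
noncomputable def mlE (lam : ℝ) (x : ℂ) : ℂ :=
  ∑' n : ℕ, x ^ n / Complex.Gamma (lam * n + 1)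

/-- The extended beta function
`B_{p,q}^{λ;σ,τ}(η₁,η₂) = ∫₀¹ t^{η₁-1}(1-t)^{η₂-1} E_λ(-p/t^σ) E_λ(-q/(1-t)^τ) dt`. -/
noncomputable def extBeta (lam sig tau : ℝ) (p q e1 e2 : ℂ) : ℂ :=
  ∫ t in Ioo (0:ℝ) 1,
    (t : ℂ) ^ (e1 - 1) * (1 - (t : ℂ)) ^ (e2 - 1) *
      mlE lam (-p / (t : ℂ) ^ (sig : ℂ)) * mlE lam (-q / (1 - (t : ℂ)) ^ (tau : ℂ))

theorem aux_gamma_lower (x T : ℝ) (hx : 0 ≤ x) (hT : 0 < T) :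
    T ^ x * Real.exp (-(T + 1)) ≤ Real.Gamma (x + 1) := by
  rw [Real.Gamma_eq_integral (by linarith)]
  have hInt := Real.GammaIntegral_convergent (s := x + 1) (by linarith)
  have hsub : Ioc T (T + 1) ⊆ Ioi (0:ℝ) := fun y hy => lt_trans hT hy.1
  calc T ^ x * Real.exp (-(T + 1)) = ∫ y in Ioc T (T + 1), T ^ x * Real.exp (-(T + 1)) := by
        simp
    _ ≤ ∫ y in Ioc T (T + 1), Real.exp (-y) * y ^ (x + 1 - 1) := by
        apply setIntegral_mono_on
        · exact continuous_const.integrableOn_Ioc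
        · exact hInt.mono_set hsub
        · exact measurableSet_Ioc
        · intro y hy
          have h1 : T ^ x ≤ y ^ x := Real.rpow_le_rpow hT.le hy.1.le hx
          have h2 : Real.exp (-(T + 1)) ≤ Real.exp (-y) := Real.exp_le_exp.2 (by linarith [hy.2])
          have : x + 1 - 1 = x := by ring
          rw [this, mul_comm]
          exact mul_le_mul h2 h1 (Real.rpow_nonneg hT.le _) (Real.exp_pos _).le
    _ ≤ _ := by
        apply setIntegral_mono_set hInt
        · filter_upwards [ae_restrict_mem measurableSet_Ioi] with y hy
          have hy' : (0:ℝ) < y := hy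
          simp only [Pi.zero_apply]
          positivity
        · exact hsub.eventuallyLE

theorem aux_gamma_cast (lam : ℝ) (n : ℕ) :
    Complex.Gamma (lam * n + 1) = ((Real.Gamma (lam * n + 1) : ℝ) : ℂ) := by
  rw [← Complex.Gamma_ofReal]; push_cast; rfl

theorem aux_gamma_pos (lam : ℝ) (hlam : 0 < lam) (n : ℕ) : 0 < Real.Gamma (lam * n + 1) :=
  Real.Gamma_pos_of_pos (by positivity)

theorem aux_summable (lam : ℝ) (hlam : 0 < lam) (R : ℝ) (hR : 0 < R) :
    Summable (fun n : ℕ => R ^ n / Real.Gamma (lam * n + 1)) := by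
  set T : ℝ := (2 * R) ^ (1 / lam) with hTdef
  have hT : 0 < T := by positivity
  have hTl : T ^ lam = 2 * R := by
    rw [hTdef, ← Real.rpow_mul (by positivity)]
    rw [one_div, inv_mul_cancel₀ hlam.ne', Real.rpow_one]
  have hgeo : Summable (fun n : ℕ => Real.exp (T + 1) * (1 / 2 : ℝ) ^ n) :=
    (summable_geometric_of_lt_one (by norm_num) (by norm_num)).mul_left _
  refine Summable.of_nonneg_of_le ?_ ?_ hgeo
  · intro n
    have := aux_gamma_pos lam hlam n
    positivity
  · intro n
    have h := aux_gamma_lower (lam * n) T (by positivity) hT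
    rw [div_le_iff₀ (aux_gamma_pos lam hlam n)]
    rw [Real.rpow_mul hT.le, hTl, Real.rpow_natCast] at h
    calc R ^ n = Real.exp (T + 1) * (1 / 2) ^ n * ((2 * R) ^ n * Real.exp (-(T + 1))) := by
          rw [Real.exp_neg, mul_pow, one_div, inv_pow]
          have := (Real.exp_pos (T + 1)).ne'
          field_simp
      _ ≤ _ := by gcongr

theorem aux_norm_term (lam : ℝ) (hlam : 0 < lam) (x : ℂ) (n : ℕ) :
    ‖x ^ n / Complex.Gamma (lam * n + 1)‖ = ‖x‖ ^ n / Real.Gamma (lam * n + 1) := by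
  rw [aux_gamma_cast, norm_div, norm_pow, Complex.norm_real, Real.norm_eq_abs,
    abs_of_pos (aux_gamma_pos lam hlam n)]

theorem aux_hasSum (lam : ℝ) (hlam : 0 < lam) (x : ℂ) :
    HasSum (fun n : ℕ => x ^ n / Complex.Gamma (lam * n + 1)) (mlE lam x) := by
  apply Summable.hasSum
  apply Summable.of_norm
  refine Summable.of_nonneg_of_le (fun n => norm_nonneg _) ?_
    (aux_summable lam hlam (‖x‖ + 1) (by positivity))
  intro n
  rw [aux_norm_term lam hlam]
  have := aux_gamma_pos lam hlam n
  gcongr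
  linarith

theorem aux_diff (lam : ℝ) (hlam : 0 < lam) : Differentiable ℂ (mlE lam) := by
  intro z
  have h : DifferentiableOn ℂ (mlE lam) (Metric.ball 0 (‖z‖ + 1)) := by
    apply Complex.differentiableOn_tsum_of_summable_norm
      (aux_summable lam hlam (‖z‖ + 1) (by positivity))
    · intro n
      exact ((differentiable_id.pow n).div_const _).differentiableOn
    · exact Metric.isOpen_ball
    · intro n w hw
      rw [aux_norm_term lam hlam]
      have := aux_gamma_pos lam hlam n
      have hw' : ‖w‖ < ‖z‖ + 1 := by simpa using hw
      gcongr
  exact h.differentiableAt (Metric.isOpen_ball.mem_nhds (by simp))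

theorem aux_zero (lam : ℝ) : mlE lam 0 = 1 := by
  unfold mlE
  rw [tsum_eq_single 0]
  · simp
  · intro n hn
    simp [hn]

/-- `E_λ(c y^λ)`. -/
noncomputable def mlU (lam : ℝ) (c : ℂ) (y : ℝ) : ℂ := mlE lam (c * ((y ^ lam : ℝ) : ℂ))

theorem aux_mlU_cont (lam : ℝ) (hlam : 0 < lam) (c : ℂ) : Continuous (mlU lam c) := by
  unfold mlU
  apply (aux_diff lam hlam).continuous.comp
  apply continuous_const.mul
  exact Complex.continuous_ofReal.comp (Real.continuous_rpow_const hlam.le)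

theorem aux_integrable_tsum {F : ℕ → ℝ → ℂ} {μ : Measure ℝ}
    (hF_int : ∀ i, Integrable (F i) μ) (hF_sum : Summable fun i => ∫ a, ‖F i a‖ ∂μ)
    (hm : AEStronglyMeasurable (fun a => ∑' i, F i a) μ) :
    Integrable (fun a => ∑' i, F i a) μ := by
  refine ⟨hm, ?_⟩
  rw [hasFiniteIntegral_iff_enorm]
  have h1 : ∫⁻ a, ‖∑' i, F i a‖ₑ ∂μ ≤ ∫⁻ a, ∑' i, ‖F i a‖ₑ ∂μ :=
    lintegral_mono fun a => enorm_tsum_le_tsum_enorm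
  refine lt_of_le_of_lt h1 ?_
  rw [lintegral_tsum (fun i => (hF_int i).1.enorm)]
  have h2 : ∀ i, ∫⁻ a, ‖F i a‖ₑ ∂μ = ENNReal.ofReal (∫ a, ‖F i a‖ ∂μ) := by
    intro i
    rw [ofReal_integral_norm_eq_lintegral_enorm (hF_int i)]
  simp_rw [h2]
  rw [← ENNReal.ofReal_tsum_of_nonneg (fun i => by positivity) hF_sum]
  exact ENNReal.ofReal_lt_top

theorem aux_lap_real (lam : ℝ) (hlam : 0 < lam) (c : ℂ) (a : ℝ) (ha : 0 < a)
    (h : ‖c‖ < a ^ lam) :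
    IntegrableOn (fun y : ℝ => cexp (-(a * y)) * mlU lam c y) (Ioi 0) ∧
    ((a : ℂ) ^ (lam : ℂ) - c) * ∫ y in Ioi (0:ℝ), cexp (-(a * y)) * mlU lam c y
      = (a : ℂ) ^ ((lam : ℂ) - 1) := by
  set F : ℕ → ℝ → ℂ := fun n y => (c ^ n / Complex.Gamma (lam * n + 1)) *
    ((y ^ (lam * n + 1 - 1) * Real.exp (-(a * y)) : ℝ) : ℂ) with hF
  have hal : 0 < a ^ lam := by positivity
  have hI : ∀ n : ℕ, ∫ y in Ioi (0:ℝ), y ^ (lam * n + 1 - 1) * Real.exp (-(a * y))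
      = (1 / a) ^ (lam * n + 1) * Real.Gamma (lam * n + 1) := fun n =>
    Real.integral_rpow_mul_exp_neg_mul_Ioi (by positivity) ha
  have hII : ∀ n : ℕ, IntegrableOn (fun y : ℝ => y ^ (lam * n + 1 - 1) * Real.exp (-(a * y)))
      (Ioi 0) := by
    intro n
    by_contra hc
    have h0 := integral_undef hc
    rw [hI n] at h0
    have := aux_gamma_pos lam hlam n
    have : 0 < (1 / a) ^ (lam * n + 1) * Real.Gamma (lam * n + 1) := by positivity
    linarith
  have hpow : ∀ n : ℕ, (1 / a) ^ (lam * n + 1) = (1 / a) * ((a ^ lam)⁻¹) ^ n := by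
    intro n
    rw [Real.rpow_add (by positivity), Real.rpow_one, Real.rpow_mul (by positivity),
      Real.rpow_natCast, one_div, Real.inv_rpow ha.le, mul_comm]
  have hFint : ∀ n, Integrable (F n) (volume.restrict (Ioi 0)) := fun n =>
    ((hII n).ofReal).const_mul _
  have hFI : ∀ n, ∫ y in Ioi (0:ℝ), F n y = (1 / (a:ℂ)) * (c / ((a ^ lam : ℝ) : ℂ)) ^ n := by
    intro n
    simp only [hF]
    rw [integral_const_mul, integral_complex_ofReal, hI n, hpow n, aux_gamma_cast]
    have : ((Real.Gamma (lam * n + 1) : ℝ) : ℂ) ≠ 0 := by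
      exact_mod_cast (aux_gamma_pos lam hlam n).ne'
    push_cast
    rw [div_pow, inv_pow]
    field_simp
  have hFN : ∀ n, ∫ y in Ioi (0:ℝ), ‖F n y‖ = (1 / a) * (‖c‖ / a ^ lam) ^ n := by
    intro n
    have : ∀ y ∈ Ioi (0:ℝ), ‖F n y‖ = (‖c‖ ^ n / Real.Gamma (lam * n + 1)) *
        (y ^ (lam * n + 1 - 1) * Real.exp (-(a * y))) := by
      intro y hy
      have hy' : (0:ℝ) < y := hy
      simp only [hF]
      rw [norm_mul, aux_norm_term lam hlam, Complex.norm_real, Real.norm_eq_abs,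
        abs_of_nonneg (by positivity)]
    rw [setIntegral_congr_fun measurableSet_Ioi this, integral_const_mul, hI n, hpow n]
    have := (aux_gamma_pos lam hlam n).ne'
    rw [div_pow, inv_pow]
    field_simp
  have hsum : Summable fun n => ∫ y in Ioi (0:ℝ), ‖F n y‖ := by
    simp_rw [hFN]
    exact (summable_geometric_of_lt_one (by positivity) ((div_lt_one hal).2 h)).mul_left _
  have hts : ∀ y ∈ Ioi (0:ℝ), ∑' n, F n y = cexp (-(a * y)) * mlU lam c y := by
    intro y hy
    have hy' : (0:ℝ) < y := hy
    have := (aux_hasSum lam hlam (c * ((y ^ lam : ℝ) : ℂ))).mul_left (cexp (-(a * y)))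
    refine Eq.trans ?_ this.tsum_eq
    congr 1
    ext n
    simp only [hF]
    rw [add_sub_cancel_right, Real.rpow_mul hy'.le, Real.rpow_natCast]
    push_cast
    rw [mul_pow]
    ring
  have hm : AEStronglyMeasurable (fun y => ∑' n, F n y) (volume.restrict (Ioi 0)) := by
    have : Continuous (fun y : ℝ => cexp (-(a * y)) * mlU lam c y) := by
      have := aux_mlU_cont lam hlam c
      fun_prop
    refine this.aestronglyMeasurable.congr ?_
    filter_upwards [ae_restrict_mem measurableSet_Ioi] with y hy
    exact (hts y hy).symm
  have hInt := aux_integrable_tsum hFint hsum hm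
  constructor
  · refine hInt.congr ?_
    filter_upwards [ae_restrict_mem measurableSet_Ioi] with y hy
    exact hts y hy
  · rw [← setIntegral_congr_fun measurableSet_Ioi hts,
      ← integral_tsum_of_summable_integral_norm hFint hsum]
    simp_rw [hFI]
    have hr : ‖c / ((a ^ lam : ℝ) : ℂ)‖ < 1 := by
      rw [norm_div, Complex.norm_real, Real.norm_eq_abs, abs_of_pos hal]
      exact (div_lt_one hal).2 h
    rw [tsum_mul_left, tsum_geometric_of_norm_lt_one hr]
    have ha0 : (a : ℂ) ≠ 0 := by exact_mod_cast ha.ne'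
    rw [Complex.cpow_sub _ _ ha0, Complex.cpow_one, Complex.ofReal_cpow ha.le]
    have hal0 : (a : ℂ) ^ (lam : ℂ) ≠ 0 := by
      rw [← Complex.ofReal_cpow ha.le]; exact_mod_cast hal.ne'
    have hne : (a : ℂ) ^ (lam : ℂ) - c ≠ 0 := by
      intro h0
      have : c = ((a ^ lam : ℝ) : ℂ) := by
        rw [Complex.ofReal_cpow ha.le]; exact (sub_eq_zero.1 h0).symm
      rw [this, Complex.norm_real, Real.norm_eq_abs, abs_of_pos hal] at h
      exact lt_irrefl _ h
    have : 1 - c / (a : ℂ) ^ (lam : ℂ) = ((a : ℂ) ^ (lam : ℂ) - c) / (a : ℂ) ^ (lam : ℂ) := by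
      field_simp
    rw [this]
    field_simp

theorem aux_int_complex {A : ℝ} {u : ℝ → ℂ} (hu : Continuous u)
    (hInt : ∀ a : ℝ, A < a → IntegrableOn (fun y : ℝ => cexp (-(a * y)) * u y) (Ioi 0))
    (s : ℂ) (hs : A < s.re) : IntegrableOn (fun y : ℝ => cexp (-(s * y)) * u y) (Ioi 0) := by
  refine Integrable.mono (hInt s.re hs) (by fun_prop) ?_
  refine Filter.Eventually.of_forall fun y => ?_
  simp [Complex.norm_exp]

theorem aux_lap_diff {A : ℝ} {u : ℝ → ℂ} (hu : Continuous u)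
    (hInt : ∀ a : ℝ, A < a → IntegrableOn (fun y : ℝ => cexp (-(a * y)) * u y) (Ioi 0))
    (s : ℂ) (hs : A < s.re) :
    DifferentiableAt ℂ (fun s : ℂ => ∫ y in Ioi (0:ℝ), cexp (-(s * y)) * u y) s := by
  set d := (s.re - A) / 4 with hd
  have hd0 : 0 < d := by rw [hd]; linarith
  have key := hasDerivAt_integral_of_dominated_loc_of_deriv_le (μ := volume.restrict (Ioi (0:ℝ)))
    (F := fun (s : ℂ) (y : ℝ) => cexp (-(s * y)) * u y)
    (F' := fun (s : ℂ) (y : ℝ) => (-(y : ℂ) * cexp (-(s * y))) * u y)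
    (x₀ := s) (s := Metric.ball s d)
    (bound := fun y => d⁻¹ * ‖cexp (-(((s.re - 2 * d : ℝ) : ℂ) * y)) * u y‖)
    (Metric.ball_mem_nhds s hd0)
    (Filter.Eventually.of_forall fun z => by fun_prop)
    (aux_int_complex hu hInt s hs) (by fun_prop) ?_ ?_ ?_
  · exact key.2.differentiableAt
  · filter_upwards [ae_restrict_mem measurableSet_Ioi] with y hy z hz
    have hy' : (0:ℝ) < y := hy
    have hz' : s.re - d < z.re := by
      have h1 : ‖z - s‖ < d := by simpa [dist_eq_norm] using hz
      have h2 := Complex.abs_re_le_norm (z - s)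
      have h3 := neg_abs_le (z - s).re
      simp only [Complex.sub_re] at h2 h3
      linarith
    rw [norm_mul, norm_mul, norm_mul, norm_neg, Complex.norm_real, Complex.norm_exp,
      Complex.norm_exp, Real.norm_eq_abs, abs_of_pos hy', ← mul_assoc]
    refine mul_le_mul_of_nonneg_right ?_ (norm_nonneg _)
    have e1 : (-(z * (y:ℂ))).re = - (z.re * y) := by simp
    have e2 : (-(((s.re - 2 * d : ℝ) : ℂ) * (y:ℂ))).re = d * y + -((s.re - d) * y) := by
      rw [← Complex.ofReal_mul, ← Complex.ofReal_neg, Complex.ofReal_re]; ring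
    rw [e1, e2, Real.exp_add, ← mul_assoc]
    have h4 : y ≤ d⁻¹ * Real.exp (d * y) := by
      rw [le_inv_mul_iff₀ hd0]
      linarith [Real.add_one_le_exp (d * y)]
    have h5 : Real.exp (-(z.re * y)) ≤ Real.exp (-((s.re - d) * y)) := by
      apply Real.exp_le_exp.2
      nlinarith
    exact mul_le_mul h4 h5 (Real.exp_pos _).le (by positivity)
  · exact ((hInt (s.re - 2 * d) (by rw [hd]; linarith)).norm).const_mul _
  · refine Filter.Eventually.of_forall fun y z _ => ?_
    have h1 : HasDerivAt (fun z : ℂ => -(z * (y:ℂ))) (-(y:ℂ)) z := by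
      simpa using ((hasDerivAt_id' z).mul_const (y:ℂ)).fun_neg
    have h2 := (h1.cexp).mul_const (u y)
    rw [mul_comm (cexp _) (-(y:ℂ))] at h2
    exact h2

theorem aux_lap (lam : ℝ) (hlam : 0 < lam) (c : ℂ) {A : ℝ} (hA : 0 ≤ A)
    (hInt : ∀ a : ℝ, A < a → IntegrableOn (fun y : ℝ => cexp (-(a * y)) * mlU lam c y) (Ioi 0))
    (s : ℂ) (hs : A < s.re) :
    (s ^ (lam : ℂ) - c) * ∫ y in Ioi (0:ℝ), cexp (-(s * y)) * mlU lam c y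
      = s ^ ((lam : ℂ) - 1) := by
  have hu := aux_mlU_cont lam hlam c
  set U : Set ℂ := {s : ℂ | A < s.re} with hU
  have hUo : IsOpen U := isOpen_lt continuous_const Complex.continuous_re
  have hUc : IsPreconnected U := (convex_halfSpace_re_gt A).isPreconnected
  have hslit : ∀ z ∈ U, z ∈ Complex.slitPlane := fun z hz => Or.inl (lt_of_le_of_lt hA hz)
  have hf : AnalyticOnNhd ℂ (fun s : ℂ => (s ^ (lam : ℂ) - c) *
      ∫ y in Ioi (0:ℝ), cexp (-(s * y)) * mlU lam c y) U := by
    apply DifferentiableOn.analyticOnNhd _ hUo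
    intro z hz
    apply DifferentiableAt.differentiableWithinAt
    exact (((differentiableAt_id).cpow_const (hslit z hz)).sub_const c).mul
      (aux_lap_diff hu hInt z hz)
  have hg : AnalyticOnNhd ℂ (fun s : ℂ => s ^ ((lam : ℂ) - 1)) U := by
    apply DifferentiableOn.analyticOnNhd _ hUo
    intro z hz
    apply DifferentiableAt.differentiableWithinAt
    exact (differentiableAt_id).cpow_const (hslit z hz)
  -- a real point
  set b : ℝ := max (A + 1) ((‖c‖ + 1) ^ (1 / lam)) with hb
  have hbA : A < b := lt_of_lt_of_le (by linarith) (le_max_left _ _)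
  have hb0 : 0 < b := lt_of_le_of_lt hA hbA
  have hbc : ∀ x : ℝ, b < x → ‖c‖ < x ^ lam := by
    intro x hx
    have h1 : (‖c‖ + 1) ^ (1 / lam) ≤ x := (le_max_right _ _).trans hx.le
    have h2 := Real.rpow_le_rpow (by positivity) h1 hlam.le
    rw [← Real.rpow_mul (by positivity), one_div, inv_mul_cancel₀ hlam.ne', Real.rpow_one] at h2
    linarith
  have hmem : ((b + 1 : ℝ) : ℂ) ∈ U := by
    simp only [hU, mem_ofPred_eq, Complex.ofReal_re]; linarith
  refine hf.eqOn_of_preconnected_of_frequently_eq hg hUc hmem ?_ hs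
  have htend : Filter.Tendsto (fun n : ℕ => ((b + 1 + 1 / ((n:ℝ) + 1) : ℝ) : ℂ)) Filter.atTop
      (nhdsWithin ((b + 1 : ℝ) : ℂ) {((b + 1 : ℝ) : ℂ)}ᶜ) := by
    apply tendsto_nhdsWithin_of_tendsto_nhds_of_eventually_within
    · have h1 : Filter.Tendsto (fun n : ℕ => b + 1 + 1 / ((n:ℝ) + 1)) Filter.atTop
          (nhds (b + 1 + 0)) := tendsto_const_nhds.add tendsto_one_div_add_atTop_nhds_zero_nat
      rw [add_zero] at h1
      exact (Complex.continuous_ofReal.tendsto _).comp h1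
    · refine Filter.Eventually.of_forall fun n => ?_
      simp only [mem_compl_iff, mem_singleton_iff, Complex.ofReal_inj]
      have : (0:ℝ) < 1 / ((n:ℝ) + 1) := by positivity
      linarith
  refine htend.frequently (Filter.Frequently.of_forall fun n => ?_)
  have hp : (0:ℝ) < 1 / ((n:ℝ) + 1) := by positivity
  exact (aux_lap_real lam hlam c _ (by linarith) (hbc _ (by linarith))).2

theorem aux_bad (lam : ℝ) (hlam : 0 < lam) (c s0 : ℂ) (hs0 : 0 < s0.re)
    (h : s0 ^ (lam : ℂ) = c) (N Y : ℝ) (hY : 0 < Y) :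
    ¬ IntegrableOn (fun y : ℝ => ((y ^ N : ℝ) : ℂ) * mlU lam c y) (Ioi Y) := by
  intro H
  have hu := aux_mlU_cont lam hlam c
  have hInt : ∀ a : ℝ, 0 < a →
      IntegrableOn (fun y : ℝ => cexp (-(a * y)) * mlU lam c y) (Ioi 0) := by
    intro a ha
    have hlo := (isLittleO_rpow_exp_pos_mul_atTop (-N) ha).bound (zero_lt_one)
    obtain ⟨Y1, hY1⟩ := Filter.eventually_atTop.1 hlo
    set Y2 := max Y Y1
    have hY2 : 0 < Y2 := lt_of_lt_of_le hY (le_max_left _ _)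
    have hcont : Continuous (fun y : ℝ => cexp (-(a * y)) * mlU lam c y) := by fun_prop
    rw [← Ioc_union_Ioi_eq_Ioi hY2.le]
    refine IntegrableOn.union hcont.integrableOn_Ioc ?_
    have H2 : IntegrableOn (fun y : ℝ => ((y ^ N : ℝ) : ℂ) * mlU lam c y) (Ioi Y2) :=
      H.mono_set (Ioi_subset_Ioi (le_max_left _ _))
    refine Integrable.mono H2 (hcont.aestronglyMeasurable) ?_
    filter_upwards [ae_restrict_mem measurableSet_Ioi] with y hy
    have hy2 : Y2 < y := hy
    have hy0 : 0 < y := hY2.trans hy2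
    have h1 := hY1 y ((le_max_right _ _).trans hy2.le)
    rw [norm_mul, norm_mul]
    refine mul_le_mul_of_nonneg_right ?_ (norm_nonneg _)
    rw [Complex.norm_real, Complex.norm_exp, Real.norm_eq_abs, abs_of_pos (by positivity)]
    rw [one_mul, Real.norm_eq_abs, Real.norm_eq_abs, abs_of_pos (by positivity),
      abs_of_pos (by positivity), Real.rpow_neg hy0.le] at h1
    have e1 : (-((a:ℂ) * (y:ℂ))).re = - (a * y) := by simp
    rw [e1, Real.exp_neg]
    have h2 : 0 < y ^ N := by positivity
    exact inv_le_of_inv_le₀ h2 h1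
  have := aux_lap lam hlam c le_rfl hInt s0 hs0
  rw [h, sub_self, zero_mul] at this
  have h0 : s0 ≠ 0 := by
    rintro rfl
    simp at hs0
  rw [eq_comm, Complex.cpow_eq_zero_iff] at this
  exact h0 this.1

theorem aux_shift (Φ : ℂ → ℂ) (e a : ℝ) (he : 0 < e) (hea : e ≤ a)
    (hd : ∀ s : ℂ, 0 < s.re → DifferentiableAt ℂ Φ s)
    (h1 : Integrable (fun w : ℝ => Φ (e + w * I))) (h2 : Integrable (fun w : ℝ => Φ (a + w * I)))
    (b : ℝ → ℝ) (hb : Filter.Tendsto b Filter.atTop (nhds 0))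
    (hbound : ∀ᶠ T : ℝ in Filter.atTop, ∀ x ∈ Icc e a,
      ‖Φ (x + T * I)‖ ≤ b T ∧ ‖Φ (x + (-T : ℝ) * I)‖ ≤ b T) :
    ∫ w : ℝ, Φ (e + w * I) = ∫ w : ℝ, Φ (a + w * I) := by
  have l1 := intervalIntegral_tendsto_integral h1 Filter.tendsto_neg_atTop_atBot Filter.tendsto_id
  have l2 := intervalIntegral_tendsto_integral h2 Filter.tendsto_neg_atTop_atBot Filter.tendsto_id
  have hrect : ∀ T : ℝ, (∫ w in -T..T, Φ (a + w * I)) - (∫ w in -T..T, Φ (e + w * I))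
      = I * ((∫ x in e..a, Φ (x + (-T : ℝ) * I)) - ∫ x in e..a, Φ (x + T * I)) := by
    intro T
    have := Complex.integral_boundary_rect_eq_zero_of_differentiableOn Φ
      (⟨e, -T⟩ : ℂ) (⟨a, T⟩ : ℂ) ?_
    · simp only [smul_eq_mul] at this
      have hI : I * I = -1 := Complex.I_mul_I
      linear_combination (-I) * this + ((∫ w in -T..T, Φ (a + w * I)) -
        (∫ w in -T..T, Φ (e + w * I))) * hI
    · intro z hz
      apply DifferentiableAt.differentiableWithinAt
      apply hd
      have hz1 : z.re ∈ uIcc e a := hz.1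
      rw [uIcc_of_le hea] at hz1
      exact lt_of_lt_of_le he hz1.1
  have l3 : Filter.Tendsto (fun T : ℝ => (∫ w in -T..T, Φ (a + w * I)) -
      (∫ w in -T..T, Φ (e + w * I))) Filter.atTop (nhds 0) := by
    have hb2 : Filter.Tendsto (fun T => 2 * (b T * |a - e|)) Filter.atTop (nhds 0) := by
      simpa using (hb.mul_const (|a - e|)).const_mul 2
    refine squeeze_zero_norm' ?_ hb2
    filter_upwards [hbound] with T hT
    rw [hrect T, norm_mul, Complex.norm_I, one_mul]
    have i1 : ‖∫ x in e..a, Φ (x + (-T : ℝ) * I)‖ ≤ b T * |a - e| := by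
      apply intervalIntegral.norm_integral_le_of_norm_le_const
      intro x hx
      rw [uIoc_of_le hea] at hx
      exact (hT x ⟨hx.1.le, hx.2⟩).2
    have i2 : ‖∫ x in e..a, Φ (x + T * I)‖ ≤ b T * |a - e| := by
      apply intervalIntegral.norm_integral_le_of_norm_le_const
      intro x hx
      rw [uIoc_of_le hea] at hx
      exact (hT x ⟨hx.1.le, hx.2⟩).1
    refine (norm_sub_le _ _).trans ?_
    linarith
  have l4 := l2.sub l1
  have := tendsto_nhds_unique l4 l3
  exact (sub_eq_zero.1 this).symm

/-- Laplace transform of `E_λ(c y^λ) - 1`. -/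
noncomputable def mlH (lam : ℝ) (c s : ℂ) : ℂ := c / (s * (s ^ (lam : ℂ) - c))

theorem aux_tail (lam : ℝ) (hlam : 0 < lam) (c : ℂ) (s : ℂ)
    (hs : (2 * ‖c‖ + 1) ^ (1 / lam) ≤ ‖s‖) :
    ‖mlH lam c s‖ ≤ 2 * ‖c‖ * ‖s‖ ^ (-(1 + lam)) := by
  have hs0 : 0 < ‖s‖ := lt_of_lt_of_le (by positivity) hs
  have h2 := Real.rpow_le_rpow (by positivity) hs hlam.le
  rw [← Real.rpow_mul (by positivity), one_div, inv_mul_cancel₀ hlam.ne', Real.rpow_one] at h2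
  have h3 : ‖s‖ ^ lam / 2 ≤ ‖s ^ (lam : ℂ) - c‖ := by
    have := norm_sub_norm_le (s ^ (lam : ℂ)) c
    rw [Complex.norm_cpow_real] at this
    linarith
  have hsl : 0 < ‖s‖ ^ lam := by positivity
  unfold mlH
  rw [norm_div, norm_mul, Real.rpow_neg hs0.le, Real.rpow_add hs0, Real.rpow_one]
  calc ‖c‖ / (‖s‖ * ‖s ^ (lam : ℂ) - c‖) ≤ ‖c‖ / (‖s‖ * (‖s‖ ^ lam / 2)) := by gcongr
    _ = _ := by field_simp

theorem aux_inv_bound (z : ℂ) (x w k : ℝ) (hx : 0 < x) (hk : 0 < k) (hk1 : k < 1)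
    (h1 : x ≤ ‖z‖) (h2 : |w| ≤ ‖z‖) (hw : w ≠ 0) : ‖z‖⁻¹ ≤ x ^ (-k) * |w| ^ (k - 1) := by
  have hz : 0 < ‖z‖ := lt_of_lt_of_le hx h1
  have hw' : 0 < |w| := abs_pos.2 hw
  have e : ‖z‖⁻¹ = ‖z‖ ^ (-k) * ‖z‖ ^ (k - 1) := by
    rw [← Real.rpow_add hz, ← Real.rpow_neg_one]; congr 1; ring
  rw [e]
  apply mul_le_mul
  · exact Real.rpow_le_rpow_of_nonpos hx h1 (by linarith)
  · exact Real.rpow_le_rpow_of_nonpos hw' h2 (by linarith)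
  · positivity
  · positivity

theorem aux_abs_rpow_int (w0 r R : ℝ) (hr : -1 < r) (hR : 0 ≤ R) :
    IntegrableOn (fun w : ℝ => |w - w0| ^ r) (Ioc (-R) R) := by
  have h := (intervalIntegral.intervalIntegrable_cpow' (a := -R - w0) (b := R - w0) (r := (r : ℂ))
    (by simpa using hr)).norm
  have h2 := h.comp_sub_right w0
  rw [intervalIntegrable_iff_integrableOn_Ioc_of_le (by linarith)] at h2
  simp only [sub_add_cancel] at h2
  refine h2.congr_fun ?_ measurableSet_Ioc
  intro w _
  simp only [Complex.norm_cpow_real, Complex.norm_real, Real.norm_eq_abs]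

theorem aux_H_bound (lam : ℝ) (hlam : 0 < lam) (c : ℂ) (w0 m : ℝ) (hw0 : w0 ≠ 0)
    (hm : 0 < m)
    (hlow : ∀ s : ℂ, 0 < s.re → m * min 1 ‖s - w0 * I‖ ≤ ‖s ^ (lam : ℂ) - c‖)
    (k : ℝ) (hk : 0 < k) (hk1 : k < 1) :
    ∃ G1 G2 : ℝ → ℝ, Integrable G1 ∧ Integrable G2 ∧
      ∀ e : ℝ, 0 < e → ∀ᵐ w : ℝ, ‖mlH lam c (e + w * I)‖ ≤ e ^ (-k) * G1 w + G2 w := by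
  set R : ℝ := (2 * ‖c‖ + 1) ^ (1 / lam) + 1 with hR
  have hR1 : 1 ≤ R := by
    have : (0:ℝ) ≤ (2 * ‖c‖ + 1) ^ (1 / lam) := by positivity
    linarith
  set K : ℝ := ‖c‖ / m * (1 + 1 / |w0|) with hK
  have hK0 : 0 ≤ K := by positivity
  have hi1 := aux_abs_rpow_int 0 (k - 1) R (by linarith) (by linarith)
  have hi2 := aux_abs_rpow_int w0 (k - 1) R (by linarith) (by linarith)
  refine ⟨(Ioc (-R) R).indicator (fun w => K * (|w - 0| ^ (k - 1) + |w - w0| ^ (k - 1))),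
    fun w => 2 * ‖c‖ * 2 ^ (1 + lam) * (1 + ‖w‖) ^ (-(1 + lam)), ?_, ?_, ?_⟩
  · rw [integrable_indicator_iff measurableSet_Ioc]
    exact (hi1.add hi2).const_mul K
  · exact (integrable_one_add_norm (by simpa using hlam)).const_mul _
  · intro e he
    have hne : ∀ a : ℝ, ∀ᵐ w : ℝ, w ≠ a := fun a => by
      simp [ae_iff, measure_singleton]
    filter_upwards [hne 0, hne w0] with w hw hww
    set s : ℂ := e + w * I with hs
    have hre : s.re = e := by simp [hs]
    have him : s.im = w := by simp [hs]
    have hse : e ≤ ‖s‖ := by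
      have := Complex.abs_re_le_norm s
      rw [hre, abs_of_pos he] at this; exact this
    have hsw : |w| ≤ ‖s‖ := by
      have := Complex.abs_im_le_norm s
      rwa [him] at this
    have hse' : e ≤ ‖s - w0 * I‖ := by
      have := Complex.abs_re_le_norm (s - w0 * I)
      simp only [Complex.sub_re, hre] at this
      simpa [abs_of_pos he] using this
    have hsw' : |w - w0| ≤ ‖s - w0 * I‖ := by
      have := Complex.abs_im_le_norm (s - w0 * I)
      simp only [Complex.sub_im, him] at this
      simpa using this
    by_cases hwR : w ∈ Ioc (-R) R
    · rw [indicator_of_mem hwR]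
      have hpos2 : 0 ≤ 2 * ‖c‖ * 2 ^ (1 + lam) * (1 + ‖w‖) ^ (-(1 + lam)) := by positivity
      have b1 := aux_inv_bound s e w k he hk hk1 hse hsw hw
      have b2 := aux_inv_bound (s - w0 * I) e (w - w0) k he hk hk1 hse' hsw' (sub_ne_zero.2 hww)
      have hl := hlow s (by rw [hre]; exact he)
      set A := ‖s‖ with hA
      set B := ‖s - w0 * I‖ with hB
      have hA0 : 0 < A := lt_of_lt_of_le he hse
      have hB0 : 0 < B := lt_of_lt_of_le he hse'
      have hw0' : 0 < |w0| := abs_pos.2 hw0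
      have htri : |w0| ≤ A + B := by
        have := norm_sub_le s (s - w0 * I)
        rw [sub_sub_cancel, norm_mul, Complex.norm_I, mul_one, Complex.norm_real] at this
        exact this
      have hmin : 0 < min 1 B := lt_min one_pos hB0
      have hmi : (min 1 B)⁻¹ ≤ 1 + B⁻¹ := by
        rcases min_choice 1 B with h | h <;> rw [h]
        · simp; positivity
        · simp
      have hAB : A⁻¹ * B⁻¹ ≤ 1 / |w0| * (A⁻¹ + B⁻¹) := by
        have : A⁻¹ + B⁻¹ = (A + B) * (A⁻¹ * B⁻¹) := by field_simp; ring
        rw [this, ← mul_assoc]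
        have h1 : 1 ≤ 1 / |w0| * (A + B) := by
          rw [one_div, le_inv_mul_iff₀ hw0']; simpa using htri
        have h2 : 0 < A⁻¹ * B⁻¹ := by positivity
        nlinarith
      have key : ‖mlH lam c s‖ ≤ K * (A⁻¹ + B⁻¹) := by
        unfold mlH
        rw [norm_div, norm_mul]
        calc ‖c‖ / (‖s‖ * ‖s ^ (lam : ℂ) - c‖) ≤ ‖c‖ / (A * (m * min 1 B)) := by
              gcongr
          _ = ‖c‖ / m * (A⁻¹ * (min 1 B)⁻¹) := by field_simp
          _ ≤ ‖c‖ / m * (A⁻¹ * (1 + B⁻¹)) := by gcongr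
          _ ≤ ‖c‖ / m * ((1 + 1 / |w0|) * (A⁻¹ + B⁻¹)) := by
              refine mul_le_mul_of_nonneg_left ?_ (by positivity)
              have : 0 < B⁻¹ := by positivity
              linarith
          _ = _ := by rw [hK]; ring
      have b3 : K * (A⁻¹ + B⁻¹) ≤ e ^ (-k) * (K * (|w - 0| ^ (k - 1) + |w - w0| ^ (k - 1))) := by
        rw [sub_zero]
        calc K * (A⁻¹ + B⁻¹) ≤ K * (e ^ (-k) * |w| ^ (k - 1) + e ^ (-k) * |w - w0| ^ (k - 1)) := by
              gcongr
          _ = _ := by ring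
      linarith
    · rw [indicator_of_notMem hwR, mul_zero, zero_add]
      have hwR' : R ≤ |w| := by
        by_contra hcon
        push Not at hcon
        exact hwR ⟨(abs_lt.1 hcon).1, (abs_lt.1 hcon).2.le⟩
      have ht := aux_tail lam hlam c s (by linarith)
      refine ht.trans ?_
      have h1 : (1 + ‖w‖) / 2 ≤ ‖s‖ := by rw [Real.norm_eq_abs]; linarith
      have h2 : ‖s‖ ^ (-(1 + lam)) ≤ ((1 + ‖w‖) / 2) ^ (-(1 + lam)) :=
        Real.rpow_le_rpow_of_nonpos (by positivity) h1 (by linarith)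
      rw [Real.div_rpow (by positivity) (by norm_num), Real.rpow_neg (by norm_num : (0:ℝ) ≤ 2),
        div_inv_eq_mul] at h2
      calc 2 * ‖c‖ * ‖s‖ ^ (-(1 + lam)) ≤ 2 * ‖c‖ * ((1 + ‖w‖) ^ (-(1 + lam)) * 2 ^ (1 + lam)) := by
            gcongr
        _ = _ := by ring

theorem aux_good (lam : ℝ) (hlam : 0 < lam) (c : ℂ) (w0 m : ℝ) (hw0 : w0 ≠ 0)
    (hm : 0 < m)
    (hlow : ∀ s : ℂ, 0 < s.re → m * min 1 ‖s - w0 * I‖ ≤ ‖s ^ (lam : ℂ) - c‖)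
    (k : ℝ) (hk : 0 < k) (hk1 : k < 1) :
    ∃ C : ℝ, 0 ≤ C ∧ ∀ y : ℝ, 1 ≤ y → ‖mlU lam c y‖ ≤ C * y ^ k := by
  obtain ⟨G1, G2, hG1, hG2, hG⟩ := aux_H_bound lam hlam c w0 m hw0 hm hlow k hk hk1
  have hu := aux_mlU_cont lam hlam c
  have hne : ∀ s : ℂ, 0 < s.re → s ^ (lam : ℂ) - c ≠ 0 := by
    intro s hs h0
    have h1 := hlow s hs
    rw [h0, norm_zero] at h1
    have h2 : 0 < ‖s - w0 * I‖ := by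
      have := Complex.abs_re_le_norm (s - w0 * I)
      have h3 : (s - w0 * I).re = s.re := by simp
      rw [h3, abs_of_pos hs] at this
      linarith
    have : 0 < m * min 1 ‖s - w0 * I‖ := mul_pos hm (lt_min one_pos h2)
    linarith
  have hs0 : ∀ s : ℂ, 0 < s.re → s ≠ 0 := by
    rintro s hs rfl
    simp at hs
  have hHd : ∀ s : ℂ, 0 < s.re → DifferentiableAt ℂ (mlH lam c) s := by
    intro s hs
    unfold mlH
    refine (differentiableAt_const c).fun_div (differentiableAt_fun_id.fun_mul
      (((differentiableAt_fun_id).cpow_const (Or.inl hs)).sub_const c)) ?_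
    exact mul_ne_zero (hs0 s hs) (hne s hs)
  have hline : ∀ e : ℝ, 0 < e → Continuous (fun w : ℝ => mlH lam c (e + w * I)) := by
    intro e he
    rw [continuous_iff_continuousAt]
    intro w
    have h1 : ContinuousAt (mlH lam c) ((e:ℂ) + w * I) := (hHd _ (by simpa using he)).continuousAt
    have h2 : ContinuousAt (fun w : ℝ => (e:ℂ) + w * I) w := by fun_prop
    exact ContinuousAt.comp (f := fun w : ℝ => (e:ℂ) + w * I) h1 h2
  have hHint : ∀ e : ℝ, 0 < e → Integrable (fun w : ℝ => mlH lam c (e + w * I)) := by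
    intro e he
    refine Integrable.mono' ((hG1.const_mul (e ^ (-k))).add hG2) (hline e he).aestronglyMeasurable ?_
    exact hG e he
  -- abscissa
  set a0 : ℝ := (‖c‖ + 1) ^ (1 / lam) with ha0
  have ha0p : 0 < a0 := by positivity
  have hac : ∀ x : ℝ, a0 < x → ‖c‖ < x ^ lam := by
    intro x hx
    have h2 := Real.rpow_le_rpow (by positivity) hx.le hlam.le
    rw [ha0, ← Real.rpow_mul (by positivity), one_div, inv_mul_cancel₀ hlam.ne', Real.rpow_one] at h2
    linarith
  have hInt0 : ∀ x : ℝ, a0 < x →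
      IntegrableOn (fun y : ℝ => cexp (-(x * y)) * mlU lam c y) (Ioi 0) := fun x hx =>
    (aux_lap_real lam hlam c x (ha0p.trans hx) (hac x hx)).1
  have hInt := aux_int_complex hu hInt0
  have hlap := aux_lap lam hlam c ha0p.le hInt0
  have hexp : ∀ s : ℂ, 0 < s.re → IntegrableOn (fun y : ℝ => cexp (-(s * y))) (Ioi 0) := by
    intro s hs
    have := integrableOn_exp_mul_complex_Ioi (a := -s) (by simpa using hs) 0
    simpa [neg_mul] using this
  have hexpI : ∀ s : ℂ, 0 < s.re → ∫ y in Ioi (0:ℝ), cexp (-(s * y)) = 1 / s := by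
    intro s hs
    have := integral_exp_mul_complex_Ioi (a := -s) (by simpa using hs) 0
    simpa [neg_mul] using this
  have hHlap : ∀ s : ℂ, a0 < s.re →
      ∫ y in Ioi (0:ℝ), cexp (-(s * y)) * (mlU lam c y - 1) = mlH lam c s := by
    intro s hs
    have hsp : 0 < s.re := ha0p.trans hs
    simp_rw [mul_sub, mul_one]
    rw [integral_sub (hInt s hs) (hexp s hsp), hexpI s hsp]
    have h1 := hlap s hs
    rw [Complex.cpow_sub _ _ (hs0 s hsp), Complex.cpow_one] at h1
    have h2 := hne s hsp
    have h3 := hs0 s hsp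
    have h4 : ∫ y in Ioi (0:ℝ), cexp (-(s * y)) * mlU lam c y
        = s ^ (lam : ℂ) / s / (s ^ (lam : ℂ) - c) := by
      rw [eq_div_iff h2, mul_comm]; exact h1
    rw [h4]
    unfold mlH
    field_simp
    ring
  set a : ℝ := a0 + 1 with ha
  have haa : a0 < a := by linarith
  have hap : 0 < a := by linarith
  set v : ℝ → ℂ := fun y => cexp (-(a * y)) * (mlU lam c (max y 0) - 1) with hv
  have hvc : Continuous v := by
    have : Continuous (fun y : ℝ => mlU lam c (max y 0)) :=
      hu.comp (continuous_id.max continuous_const)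
    rw [hv]
    fun_prop
  have hv0 : ∀ y : ℝ, y ≤ 0 → v y = 0 := by
    intro y hy
    simp only [hv]
    rw [max_eq_right hy]
    unfold mlU
    rw [Real.zero_rpow hlam.ne', Complex.ofReal_zero, mul_zero, aux_zero]
    simp
  have hv1 : ∀ y ∈ Ioi (0:ℝ), v y = cexp (-(a * y)) * (mlU lam c y - 1) := by
    intro y hy
    have hy' : (0:ℝ) < y := hy
    simp only [hv]
    rw [max_eq_left hy'.le]
  have hvI : Integrable v := by
    have h1 : IntegrableOn v (Ioi 0) := by
      have := (hInt a (by simpa using haa)).sub (hexp a (by simpa using hap))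
      refine IntegrableOn.congr_fun this ?_ measurableSet_Ioi
      intro y hy
      rw [hv1 y hy]
      simp only [Pi.sub_apply]
      ring
    have h2 : IntegrableOn v (Iic 0) := by
      refine IntegrableOn.congr_fun (integrableOn_zero) ?_ measurableSet_Iic
      intro y hy
      exact (hv0 y hy).symm
    rw [← integrableOn_univ, ← Iic_union_Ioi (a := (0:ℝ))]
    exact h2.union h1
  have hvF : ∀ x : ℝ, FourierTransform.fourier v x = mlH lam c (a + ((2 * Real.pi * x : ℝ) : ℂ) * I) := by
    intro x
    rw [Real.fourier_real_eq_integral_exp_smul]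
    rw [← hHlap _ (by simpa using haa)]
    rw [← setIntegral_eq_integral_of_forall_compl_eq_zero (s := Ioi (0:ℝ))]
    · apply setIntegral_congr_fun measurableSet_Ioi
      intro y hy
      simp only [smul_eq_mul]
      rw [hv1 y hy, ← mul_assoc, ← Complex.exp_add]
      congr 2
      push_cast
      ring
    · intro y hy
      have : y ≤ 0 := not_lt.1 hy
      rw [hv0 y this, smul_zero]
  have hvFI : Integrable (FourierTransform.fourier v) := by
    have h1 : FourierTransform.fourier v
        = fun x : ℝ => mlH lam c (a + ((2 * Real.pi * x : ℝ) : ℂ) * I) := funext hvF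
    rw [h1]
    exact (hHint a hap).comp_mul_left' (R := 2 * Real.pi) (by positivity)
  have hinv := hvc.fourierInv_fourier_eq hvI hvFI
  have hrep : ∀ y : ℝ, 0 < y → mlU lam c y - 1 =
      (((2 * Real.pi)⁻¹ : ℝ) : ℂ) * ∫ w : ℝ, cexp ((a + w * I) * y) * mlH lam c (a + w * I) := by
    intro y hy
    have h1 := congrFun hinv y
    rw [Real.fourierInv_eq', hv1 y hy] at h1
    have h2 : mlU lam c y - 1 = cexp (a * y) * (cexp (-(a * y)) * (mlU lam c y - 1)) := by
      rw [← mul_assoc, ← Complex.exp_add, add_neg_cancel, Complex.exp_zero, one_mul]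
    rw [h2, ← h1, ← integral_const_mul]
    have h3 := Measure.integral_comp_mul_left
      (fun w : ℝ => cexp ((a + w * I) * y) * mlH lam c (a + w * I)) (2 * Real.pi)
    rw [abs_of_pos (by positivity), Complex.real_smul] at h3
    rw [← h3]
    congr 1
    ext x
    rw [hvF, smul_eq_mul, ← mul_assoc, ← Complex.exp_add]
    congr 2
    simp
    ring
  -- shifting
  have hshift : ∀ y : ℝ, 0 < y → ∀ e : ℝ, 0 < e → e ≤ a →
      ∫ w : ℝ, cexp ((e + w * I) * y) * mlH lam c (e + w * I)
      = ∫ w : ℝ, cexp ((a + w * I) * y) * mlH lam c (a + w * I) := by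
    intro y hy e he hea
    have hI : ∀ x : ℝ, 0 < x →
        Integrable (fun w : ℝ => cexp ((x + w * I) * y) * mlH lam c (x + w * I)) := by
      intro x hx
      have hc1 := hline x hx
      refine Integrable.mono' ((hHint x hx).norm.const_mul (Real.exp (x * y)))
        (Continuous.aestronglyMeasurable (by fun_prop)) ?_
      refine Filter.Eventually.of_forall fun w => ?_
      rw [norm_mul, Complex.norm_exp]
      simp
    refine aux_shift (fun s => cexp (s * y) * mlH lam c s) e a he hea ?_ (hI e he) (hI a hap)
      (fun T => Real.exp (a * y) * (2 * ‖c‖ * T ^ (-(1 + lam)))) ?_ ?_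
    · intro s hs
      have := hHd s hs
      exact ((differentiableAt_fun_id.mul_const (y:ℂ)).cexp).fun_mul this
    · have := (tendsto_rpow_neg_atTop (y := 1 + lam) (by linarith))
      simpa using (this.const_mul (2 * ‖c‖)).const_mul (Real.exp (a * y))
    · filter_upwards [Filter.eventually_ge_atTop ((2 * ‖c‖ + 1) ^ (1 / lam)),
        Filter.eventually_gt_atTop 0] with T hT hT0 x hx
      have hgen : ∀ S : ℝ, |S| = T →
          ‖cexp ((x + S * I) * y) * mlH lam c (x + S * I)‖
            ≤ Real.exp (a * y) * (2 * ‖c‖ * T ^ (-(1 + lam))) := by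
        intro S hS
        have him : T ≤ ‖(x:ℂ) + S * I‖ := by
          have := Complex.abs_im_le_norm ((x:ℂ) + S * I)
          simpa [hS] using this
        have h1 := aux_tail lam hlam c ((x:ℂ) + S * I) (hT.trans him)
        rw [norm_mul, Complex.norm_exp]
        apply mul_le_mul
        · apply Real.exp_le_exp.2
          have : (((x:ℂ) + S * I) * y).re = x * y := by simp
          rw [this]
          exact mul_le_mul_of_nonneg_right hx.2 hy.le
        · refine h1.trans ?_
          have := Real.rpow_le_rpow_of_nonpos hT0 him (z := -(1 + lam)) (by linarith)
          gcongr
        · positivity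
        · positivity
      exact ⟨hgen T (abs_of_pos hT0), hgen (-T) (by rw [abs_neg, abs_of_pos hT0])⟩
  -- final bound
  set I1 := ∫ w, |G1 w| with hI1
  set I2 := ∫ w, |G2 w| with hI2
  have hI1p : 0 ≤ I1 := integral_nonneg fun w => abs_nonneg _
  have hI2p : 0 ≤ I2 := integral_nonneg fun w => abs_nonneg _
  set D := Real.exp 1 * (I1 + I2) with hD
  have hD0 : 0 ≤ D := by positivity
  -- a is at least one
  have ha1 : 1 ≤ a := by linarith
  refine ⟨1 + (2 * Real.pi)⁻¹ * D, by positivity, ?_⟩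
  intro y hy
  have hy0 : 0 < y := by linarith
  have hyk : 1 ≤ y ^ k := Real.one_le_rpow hy hk.le
  have he : 0 < y⁻¹ := by positivity
  have he1 : y⁻¹ ≤ a := (inv_le_one_of_one_le₀ hy).trans ha1
  have h1 := hrep y hy0
  rw [← hshift y hy0 y⁻¹ he he1] at h1
  have h2 : ‖∫ w : ℝ, cexp (((y⁻¹ : ℝ) + w * I) * y) * mlH lam c ((y⁻¹ : ℝ) + w * I)‖
      ≤ D * y ^ k := by
    have hdom : Integrable (fun w => Real.exp 1 * (y ^ k * |G1 w| + |G2 w|)) :=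
      ((hG1.abs.const_mul _).add hG2.abs).const_mul _
    calc _ ≤ ∫ w, Real.exp 1 * (y ^ k * |G1 w| + |G2 w|) := by
          apply norm_integral_le_of_norm_le hdom
          filter_upwards [hG y⁻¹ he] with w hw
          rw [norm_mul, Complex.norm_exp]
          have h3 : ((((y⁻¹ : ℝ) : ℂ) + w * I) * y).re = 1 := by
            simp [hy0.ne']
          rw [h3]
          refine mul_le_mul_of_nonneg_left ?_ (Real.exp_pos _).le
          refine hw.trans ?_
          rw [Real.rpow_neg he.le, Real.inv_rpow hy0.le, inv_inv]
          have h5 := mul_le_mul_of_nonneg_left (le_abs_self (G1 w)) (by positivity : 0 ≤ y ^ k)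
          have h6 := le_abs_self (G2 w)
          linarith
      _ = Real.exp 1 * (y ^ k * I1 + I2) := by
          rw [integral_const_mul, integral_add (hG1.abs.const_mul _) hG2.abs, integral_const_mul]
      _ ≤ Real.exp 1 * (y ^ k * I1 + y ^ k * I2) := by
          gcongr
          nlinarith
      _ = _ := by rw [hD]; ring
  have h3 : ‖mlU lam c y - 1‖ ≤ (2 * Real.pi)⁻¹ * (D * y ^ k) := by
    rw [h1, norm_mul, Complex.norm_real, Real.norm_eq_abs, abs_of_pos (by positivity)]
    gcongr
  have h4 : ‖mlU lam c y‖ ≤ ‖mlU lam c y - 1‖ + 1 := by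
    have := norm_add_le (mlU lam c y - 1) 1
    simpa using this
  calc ‖mlU lam c y‖ ≤ (2 * Real.pi)⁻¹ * (D * y ^ k) + 1 := by linarith
    _ ≤ (2 * Real.pi)⁻¹ * (D * y ^ k) + y ^ k := by linarith
    _ = _ := by ring

theorem aux_slit (s : ℂ) (hs : 0 ≤ s.re) (h0 : s ≠ 0) : s ∈ Complex.slitPlane := by
  rcases hs.lt_or_eq with h | h
  · exact Or.inl h
  · right
    intro hi
    exact h0 (Complex.ext h.symm hi)

theorem aux_unique (lam : ℝ) (hlam : 0 < lam) (h2 : lam < 2) (s : ℂ) (hs : 0 ≤ s.re) :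
    (s ^ (lam : ℂ)) ^ ((1 / lam : ℝ) : ℂ) = s := by
  have harg : |s.arg| ≤ Real.pi / 2 := Complex.abs_arg_le_pi_div_two_iff.2 hs
  have him : (Complex.log s * (lam : ℂ)).im = s.arg * lam := by
    simp [Complex.log_im]
  have hb : |s.arg * lam| < Real.pi := by
    rw [abs_mul, abs_of_pos hlam]
    calc |s.arg| * lam ≤ Real.pi / 2 * lam := by gcongr
      _ < Real.pi / 2 * 2 := by gcongr
      _ = Real.pi := by ring
  rw [← Complex.cpow_mul]
  · have : (lam : ℂ) * ((1 / lam : ℝ) : ℂ) = 1 := by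
      rw [← Complex.ofReal_mul, mul_one_div_cancel hlam.ne', Complex.ofReal_one]
    rw [this, Complex.cpow_one]
  · rw [him]; exact (abs_lt.1 hb).1
  · rw [him]; exact (abs_lt.1 hb).2.le

theorem aux_low (lam : ℝ) (hlam : 0 < lam) (h2 : lam < 2) (c : ℂ) (hc : c ≠ 0)
    (hno : ¬ ∃ s0 : ℂ, 0 < s0.re ∧ s0 ^ (lam : ℂ) = c) :
    ∃ w0 m : ℝ, w0 ≠ 0 ∧ 0 < m ∧
      ∀ s : ℂ, 0 < s.re → m * min 1 ‖s - w0 * I‖ ≤ ‖s ^ (lam : ℂ) - c‖ := by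
  have hc' : 0 < ‖c‖ := norm_pos_iff.2 hc
  obtain ⟨w0, hw0, hw⟩ : ∃ w0 : ℝ, w0 ≠ 0 ∧
      ∀ s : ℂ, 0 ≤ s.re → s ^ (lam : ℂ) = c → s = w0 * I := by
    by_cases hex : ∃ t : ℂ, 0 ≤ t.re ∧ t ^ (lam : ℂ) = c
    · obtain ⟨t, ht, htc⟩ := hex
      have hre : t.re = 0 := by
        rcases ht.lt_or_eq with h | h
        · exact absurd ⟨t, h, htc⟩ hno
        · exact h.symm
      have hte : t = t.im * I := by
        apply Complex.ext <;> simp [hre]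
      refine ⟨t.im, ?_, ?_⟩
      · intro h0
        rw [h0, Complex.ofReal_zero, zero_mul] at hte
        rw [hte, Complex.zero_cpow (by exact_mod_cast hlam.ne')] at htc
        exact hc htc.symm
      · intro s hs hsc
        rw [← hte, ← aux_unique lam hlam h2 s hs, ← aux_unique lam hlam h2 t ht, hsc, htc]
    · refine ⟨1, one_ne_zero, ?_⟩
      intro s hs hsc
      exact absurd ⟨s, hs, hsc⟩ hex
  set R : ℝ := (2 * ‖c‖ + 1) ^ (1 / lam) with hR
  have hcomp : IsCompact (Metric.closedBall (0:ℂ) R ∩ {s : ℂ | 0 ≤ s.re}) :=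
    (isCompact_closedBall 0 R).inter_right (isClosed_le continuous_const Complex.continuous_re)
  have key : ∃ m : ℝ, 0 < m ∧ ∀ s ∈ (Metric.closedBall (0:ℂ) R ∩ {s : ℂ | 0 ≤ s.re}),
      m * min 1 ‖s - w0 * I‖ ≤ ‖s ^ (lam : ℂ) - c‖ := by
    refine hcomp.induction_on (p := fun S => ∃ m : ℝ, 0 < m ∧ ∀ s ∈ S,
      m * min 1 ‖s - w0 * I‖ ≤ ‖s ^ (lam : ℂ) - c‖) ⟨1, one_pos, by simp⟩ ?_ ?_ ?_
    · rintro S T hST ⟨m, hm, h⟩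
      exact ⟨m, hm, fun s hs => h s (hST hs)⟩
    · rintro S T ⟨m, hm, h⟩ ⟨m', hm', h'⟩
      refine ⟨min m m', lt_min hm hm', ?_⟩
      have hmn : ∀ s : ℂ, 0 ≤ min 1 ‖s - w0 * I‖ := fun s => le_min zero_le_one (norm_nonneg _)
      rintro s (hs | hs)
      · exact (mul_le_mul_of_nonneg_right (min_le_left _ _) (hmn s)).trans (h s hs)
      · exact (mul_le_mul_of_nonneg_right (min_le_right _ _) (hmn s)).trans (h' s hs)
    · rintro z ⟨-, hz⟩
      have hz' : 0 ≤ z.re := hz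
      suffices hsuf : ∃ m : ℝ, 0 < m ∧ ∀ᶠ s in nhds z,
          m * min 1 ‖s - w0 * I‖ ≤ ‖s ^ (lam : ℂ) - c‖ by
        obtain ⟨m, hm, h⟩ := hsuf
        exact ⟨_, mem_nhdsWithin_of_mem_nhds h, m, hm, fun s hs => hs⟩
      by_cases hz0 : z = 0
      · refine ⟨‖c‖ / 2, by positivity, ?_⟩
        have hcont : Continuous (fun s : ℂ => ‖s‖ ^ lam) :=
          (Real.continuous_rpow_const hlam.le).comp continuous_norm
        have h1 : ∀ᶠ s in nhds z, ‖s‖ ^ lam < ‖c‖ / 2 := by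
          apply hcont.continuousAt.eventually_lt continuousAt_const
          rw [hz0, norm_zero, Real.zero_rpow hlam.ne']
          positivity
        filter_upwards [h1] with s hs
        have h3 := norm_sub_norm_le c (s ^ (lam : ℂ))
        rw [Complex.norm_cpow_real, norm_sub_rev] at h3
        have h4 : min 1 ‖s - w0 * I‖ ≤ 1 := min_le_left _ _
        nlinarith
      · have hsl := aux_slit z hz' hz0
        by_cases hzc : z ^ (lam : ℂ) = c
        · have hzw := hw z hz' hzc
          rw [← hzw]
          have hd : HasDerivAt (fun s : ℂ => s ^ (lam : ℂ)) ((lam : ℂ) * z ^ ((lam : ℂ) - 1)) z := by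
            simpa using (hasDerivAt_id z).cpow_const (c := (lam : ℂ)) hsl
          set d := (lam : ℂ) * z ^ ((lam : ℂ) - 1) with hddef
          have hd0 : 0 < ‖d‖ := by
            rw [norm_pos_iff, hddef]
            refine mul_ne_zero (by exact_mod_cast hlam.ne') ?_
            intro h0
            exact hz0 ((Complex.cpow_eq_zero_iff _ _).1 h0).1
          refine ⟨‖d‖ / 2, by positivity, ?_⟩
          have hl := (hasDerivAt_iff_isLittleO.1 hd).bound (half_pos hd0)
          filter_upwards [hl] with s hs
          rw [hzc, smul_eq_mul] at hs
          have h3 := norm_sub_norm_le ((s - z) * d) ((s - z) * d - (s ^ (lam : ℂ) - c))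
          rw [sub_sub_cancel, norm_sub_rev ((s - z) * d), norm_mul] at h3
          have h4 : min 1 ‖s - z‖ ≤ ‖s - z‖ := min_le_right _ _
          nlinarith
        · have hp : 0 < ‖z ^ (lam : ℂ) - c‖ := norm_pos_iff.2 (sub_ne_zero.2 hzc)
          refine ⟨‖z ^ (lam : ℂ) - c‖ / 2, by positivity, ?_⟩
          have hcont : ContinuousAt (fun s : ℂ => ‖s ^ (lam : ℂ) - c‖) z :=
            ((continuousAt_id.cpow continuousAt_const hsl).sub continuousAt_const).norm
          have h1 : ∀ᶠ s in nhds z, ‖z ^ (lam : ℂ) - c‖ / 2 < ‖s ^ (lam : ℂ) - c‖ :=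
            continuousAt_const.eventually_lt hcont (by linarith)
          filter_upwards [h1] with s hs
          have h4 : min 1 ‖s - w0 * I‖ ≤ 1 := min_le_left _ _
          nlinarith
  obtain ⟨m, hm, hmk⟩ := key
  refine ⟨w0, min m (1 / 2), hw0, by positivity, ?_⟩
  intro s hs
  have hmn : 0 ≤ min 1 ‖s - w0 * I‖ := le_min zero_le_one (norm_nonneg _)
  by_cases hsR : ‖s‖ ≤ R
  · refine (mul_le_mul_of_nonneg_right (min_le_left _ _) hmn).trans (hmk s ⟨?_, hs.le⟩)
    simpa using hsR
  · push Not at hsR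
    have h2 := Real.rpow_le_rpow (by positivity) hsR.le hlam.le
    rw [hR, ← Real.rpow_mul (by positivity), one_div, inv_mul_cancel₀ hlam.ne', Real.rpow_one] at h2
    have h3 := norm_sub_norm_le (s ^ (lam : ℂ)) c
    rw [Complex.norm_cpow_real] at h3
    have h4 : min 1 ‖s - w0 * I‖ ≤ 1 := min_le_left _ _
    have h5 : min m (1 / 2) ≤ 1 / 2 := min_le_right _ _
    have h6 : 0 < min m (1 / 2) := by positivity
    nlinarith

theorem aux_cos (x : ℂ) : mlE 2 (-x ^ 2) = Complex.cos x := by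
  have h1 := (aux_hasSum 2 two_pos (-x ^ 2))
  have h2 := Complex.hasSum_cos x
  refine h1.unique ?_
  convert h2 using 2 with n
  have : Complex.Gamma (((2:ℝ):ℂ) * n + 1) = ((2 * n).factorial : ℂ) := by
    rw [← Complex.Gamma_nat_eq_factorial]
    push_cast
    rfl
  rw [this, neg_pow, ← pow_mul]

theorem aux_dich (lam : ℝ) (hlam : 0 < lam) (c : ℂ) (hc : c ≠ 0) :
    (∃ s0 : ℂ, 0 < s0.re ∧ s0 ^ (lam : ℂ) = c) ∨
    (∀ k : ℝ, 0 < k → k < 1 → ∃ C : ℝ, 0 ≤ C ∧ ∀ y : ℝ, 1 ≤ y → ‖mlU lam c y‖ ≤ C * y ^ k) := by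
  by_cases hno : ∃ s0 : ℂ, 0 < s0.re ∧ s0 ^ (lam : ℂ) = c
  · exact Or.inl hno
  right
  rcases lt_or_ge lam 2 with h2 | h2
  · obtain ⟨w0, m, hw0, hm, hlow⟩ := aux_low lam hlam h2 c hc hno
    exact fun k hk hk1 => aux_good lam hlam c w0 m hw0 hm hlow k hk hk1
  · have hlog : (Complex.log c * ((1 / lam : ℝ) : ℂ)).im = c.arg / lam := by
      rw [Complex.im_mul_ofReal, Complex.log_im]; ring
    have hpi := Real.pi_pos
    have habs : |c.arg / lam| ≤ Real.pi / 2 := by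
      rw [abs_div, abs_of_pos hlam]
      have := Complex.abs_arg_le_pi c
      gcongr
    have hpow : (c ^ ((1 / lam : ℝ) : ℂ)) ^ (lam : ℂ) = c := by
      rw [← Complex.cpow_mul]
      · rw [← Complex.ofReal_mul, one_div_mul_cancel hlam.ne', Complex.ofReal_one, Complex.cpow_one]
      · rw [hlog]; linarith [(abs_le.1 habs).1]
      · rw [hlog]; linarith [(abs_le.1 habs).2]
    have hre : ¬ 0 < (c ^ ((1 / lam : ℝ) : ℂ)).re := fun h => hno ⟨_, h, hpow⟩
    rw [Complex.cpow_def_of_ne_zero hc, Complex.exp_re, hlog] at hre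
    have hcos : ¬ 0 < Real.cos (c.arg / lam) := fun h => hre (mul_pos (Real.exp_pos _) h)
    have hge : Real.pi / 2 ≤ |c.arg / lam| := by
      by_contra hcon
      push Not at hcon
      exact hcos (Real.cos_pos_of_mem_Ioo ⟨(abs_lt.1 hcon).1, (abs_lt.1 hcon).2⟩)
    have hle : |c.arg| ≤ Real.pi := Complex.abs_arg_le_pi c
    rw [abs_div, abs_of_pos hlam, le_div_iff₀ hlam] at hge
    have hlam2 : lam = 2 := by nlinarith
    have harg : c.arg = Real.pi := by
      have h3 : |c.arg| = Real.pi := by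
        rw [hlam2] at hge
        linarith
      rcases abs_choice c.arg with h | h
      · rw [← h3, h]
      · rw [h] at h3
        have := Complex.neg_pi_lt_arg c
        linarith
    subst hlam2
    rw [Complex.arg_eq_pi_iff] at harg
    intro k hk _
    refine ⟨1, zero_le_one, ?_⟩
    intro y hy
    have hy0 : 0 ≤ y := by linarith
    have hcc : c * (((y ^ (2:ℝ) : ℝ)) : ℂ) = -((Real.sqrt (-c.re) * y : ℝ) : ℂ) ^ 2 := by
      have e : c = ((c.re : ℝ) : ℂ) := by apply Complex.ext <;> simp [harg.2]
      rw [e, ← Complex.ofReal_mul, ← Complex.ofReal_pow, ← Complex.ofReal_neg, mul_pow,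
        Complex.ofReal_re, Real.sq_sqrt (by linarith [harg.1])]
      congr 1
      rw [Real.rpow_two]; ring
    unfold mlU
    rw [hcc, aux_cos, ← Complex.ofReal_cos, Complex.norm_real, Real.norm_eq_abs]
    have h5 := Real.abs_cos_le_one (Real.sqrt (-c.re) * y)
    have h6 : 1 ≤ y ^ k := Real.one_le_rpow hy hk.le
    linarith


theorem aux_conv (lam sig : ℝ) (hlam : 0 < lam) (p : ℂ) (t : ℝ) (ht : 0 < t) :
    mlE lam (-p / (t : ℂ) ^ (sig : ℂ)) = mlU lam (-p) (t ^ (-(sig / lam))) := by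
  unfold mlU
  rw [← Real.rpow_mul ht.le, show -(sig / lam) * lam = -sig by field_simp,
    Real.rpow_neg ht.le, ← Complex.ofReal_cpow ht.le]
  push_cast
  rw [div_eq_mul_inv]

theorem aux_low_entire (lam : ℝ) (hlam : 0 < lam) (w0 : ℂ) :
    ∃ (c : ℝ) (j : ℕ), 0 < c ∧ ∀ᶠ w in nhds w0, c * ‖w - w0‖ ^ j ≤ ‖mlE lam w‖ := by
  have hd := aux_diff lam hlam
  have han : ∀ z, AnalyticAt ℂ (mlE lam) z := fun z => hd.analyticAt z
  have hne : ¬ ∀ᶠ z in nhds w0, mlE lam z = 0 := by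
    intro h
    have h0 : mlE lam = fun _ => (0 : ℂ) :=
      AnalyticOnNhd.eq_of_eventuallyEq (z₀ := w0) (fun z _ => han z)
        (fun z _ => analyticAt_const) h
    have h1 := aux_zero lam
    rw [h0] at h1
    simp at h1
  obtain ⟨j, g, hg, hg0, hev⟩ := (han w0).exists_eventuallyEq_pow_smul_nonzero_iff.mpr hne
  refine ⟨‖g w0‖ / 2, j, by positivity, ?_⟩
  have hc : ∀ᶠ w in nhds w0, ‖g w0‖ / 2 < ‖g w‖ :=
    hg.continuousAt.norm.eventually (lt_mem_nhds (by
      have := norm_pos_iff.mpr hg0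
      linarith))
  filter_upwards [hev, hc] with w h1 h2
  rw [h1, norm_smul, norm_pow, mul_comm]
  gcongr

theorem aux_lowG (lam tau : ℝ) (hlam : 0 < lam) (htau : 0 < tau) (q e2 : ℂ) (hq : q ≠ 0) :
    ∃ (c : ℝ) (j : ℕ) (d : ℝ), 0 < c ∧ 0 < d ∧ d < 1 ∧ ∀ t : ℝ, 0 < t → t < d →
      c * t ^ j ≤ ‖(1 - (t : ℂ)) ^ (e2 - 1) * mlE lam (-q / (1 - (t : ℂ)) ^ (tau : ℂ))‖ := by
  obtain ⟨c, j, hc, hev⟩ := aux_low_entire lam hlam (-q)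
  have hsl : (1 - ((0 : ℝ) : ℂ)) ∈ Complex.slitPlane := by simp
  have h1 : ContinuousAt (fun t : ℝ => (1 - (t : ℂ)) ^ (e2 - 1)) 0 := by
    refine ContinuousAt.cpow (by fun_prop) continuousAt_const hsl
  have h2 : ContinuousAt (fun t : ℝ => -q / (1 - (t : ℂ)) ^ (tau : ℂ)) 0 := by
    refine ContinuousAt.div continuousAt_const
      (ContinuousAt.cpow (by fun_prop) continuousAt_const hsl) (by simp)
  have e1 : ∀ᶠ t : ℝ in nhds 0, 1 / 2 < ‖(1 - (t : ℂ)) ^ (e2 - 1)‖ :=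
    h1.norm.eventually (lt_mem_nhds (by simp; norm_num))
  have h2' : Filter.Tendsto (fun t : ℝ => -q / (1 - (t : ℂ)) ^ (tau : ℂ)) (nhds 0)
      (nhds (-q)) := by
    have := h2.tendsto
    simpa using this
  have e2' := h2'.eventually hev
  obtain ⟨d, hd, hball⟩ := Metric.eventually_nhds_iff.mp (e1.and e2')
  refine ⟨1 / 2 * (c * (‖q‖ * tau) ^ j), j, min d (1 / 2), ?_, by positivity, ?_, ?_⟩
  · have := norm_pos_iff.mpr hq
    positivity
  · exact lt_of_le_of_lt (min_le_right _ _) (by norm_num)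
  · intro t ht htd
    have htd1 : t < d := lt_of_lt_of_le htd (min_le_left _ _)
    have ht2 : t < 1 / 2 := lt_of_lt_of_le htd (min_le_right _ _)
    obtain ⟨a1, a2⟩ := hball (y := t) (by simpa [abs_of_pos ht] using htd1)
    have hpos : 0 < 1 - t := by linarith
    have hkey : ‖q‖ * tau * t ≤ ‖-q / (1 - (t : ℂ)) ^ (tau : ℂ) - -q‖ := by
      have hx : -q / (1 - (t : ℂ)) ^ (tau : ℂ) - -q
          = -q * (((1 - t) ^ (-tau) - 1 : ℝ) : ℂ) := by
        rw [Real.rpow_neg hpos.le]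
        push_cast
        rw [Complex.ofReal_cpow hpos.le]
        push_cast
        ring
      rw [hx, norm_mul, norm_neg, mul_assoc, Complex.norm_real]
      refine mul_le_mul_of_nonneg_left ?_ (norm_nonneg _)
      refine le_trans ?_ (le_abs_self _)
      rw [Real.rpow_def_of_pos hpos]
      have l1 := Real.log_le_sub_one_of_pos hpos
      have l2 := Real.add_one_le_exp (Real.log (1 - t) * -tau)
      nlinarith
    rw [norm_mul]
    have hm : c * (‖q‖ * tau * t) ^ j ≤ ‖mlE lam (-q / (1 - (t : ℂ)) ^ (tau : ℂ))‖ := by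
      refine le_trans ?_ a2
      gcongr
    calc 1 / 2 * (c * (‖q‖ * tau) ^ j) * t ^ j = 1 / 2 * (c * (‖q‖ * tau * t) ^ j) := by
          rw [mul_pow _ t]; ring
      _ ≤ _ := by gcongr

/-- the integrand -/
noncomputable def auxInt (lam sig tau : ℝ) (p q e1 e2 : ℂ) (t : ℝ) : ℂ :=
  (t : ℂ) ^ (e1 - 1) * (1 - (t : ℂ)) ^ (e2 - 1) *
      mlE lam (-p / (t : ℂ) ^ (sig : ℂ)) * mlE lam (-q / (1 - (t : ℂ)) ^ (tau : ℂ))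

theorem auxInt_cont (lam sig tau : ℝ) (hlam : 0 < lam) (p q e1 e2 : ℂ) :
    ContinuousOn (auxInt lam sig tau p q e1 e2) (Ioo 0 1) := by
  intro t ht
  apply ContinuousAt.continuousWithinAt
  have hs1 : (t : ℂ) ∈ Complex.slitPlane := by
    rw [Complex.mem_slitPlane_iff]; left; simpa using ht.1
  have hs2 : (1 - (t : ℂ)) ∈ Complex.slitPlane := by
    rw [Complex.mem_slitPlane_iff]; left; simpa using ht.2
  have hE := (aux_diff lam hlam).continuous
  have hc1 : ∀ a : ℂ, ContinuousAt (fun t : ℝ => (t : ℂ) ^ a) t := fun a =>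
    ContinuousAt.cpow (by fun_prop) continuousAt_const hs1
  have hc2 : ∀ a : ℂ, ContinuousAt (fun t : ℝ => (1 - (t : ℂ)) ^ a) t := fun a =>
    ContinuousAt.cpow (by fun_prop) continuousAt_const hs2
  have hn1 : (t : ℂ) ^ (sig : ℂ) ≠ 0 := by
    rw [Complex.cpow_ne_zero_iff]; left; exact Complex.slitPlane_ne_zero hs1
  have hn2 : (1 - (t : ℂ)) ^ (tau : ℂ) ≠ 0 := by
    rw [Complex.cpow_ne_zero_iff]; left; exact Complex.slitPlane_ne_zero hs2
  unfold auxInt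
  refine ((hc1 _).mul (hc2 _)).mul ?_ |>.mul ?_
  · exact hE.continuousAt.comp (continuousAt_const.div (hc1 _) hn1)
  · exact hE.continuousAt.comp (continuousAt_const.div (hc2 _) hn2)

theorem auxInt_bad (lam sig tau : ℝ) (hlam : 0 < lam) (hsig : 0 < sig) (htau : 0 < tau)
    (p q e1 e2 : ℂ) (hq : q ≠ 0) (s0 : ℂ) (hs0 : 0 < s0.re) (h : s0 ^ (lam : ℂ) = -p) :
    ¬ IntegrableOn (auxInt lam sig tau p q e1 e2) (Ioo 0 1) := by
  intro hInt
  obtain ⟨c, j, d, hc, hd, hd1, hlow⟩ := aux_lowG lam tau hlam htau q e2 hq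
  set b : ℝ := sig / lam with hb
  have hbpos : 0 < b := by positivity
  set M : ℝ := e1.re - 1 + j with hM
  have hI : IntegrableOn (fun t : ℝ => ((t ^ M : ℝ) : ℂ) * mlU lam (-p) (t ^ (-b))) (Ioo 0 d) := by
    have h0 : IntegrableOn (auxInt lam sig tau p q e1 e2) (Ioo 0 d) :=
      hInt.mono_set (Ioo_subset_Ioo_right hd1.le)
    refine Integrable.mono (g := fun t => ((1 / c : ℝ) : ℂ) * auxInt lam sig tau p q e1 e2 t)
      (Integrable.const_mul h0 _) ?_ ?_
    · apply ContinuousOn.aestronglyMeasurable _ measurableSet_Ioo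
      intro t ht
      apply ContinuousAt.continuousWithinAt
      have htn : t ≠ 0 := ht.1.ne'
      refine ContinuousAt.mul ?_ ?_
      · exact Complex.continuous_ofReal.continuousAt.comp
          (Real.continuousAt_rpow_const _ _ (Or.inl htn))
      · exact (aux_mlU_cont lam hlam (-p)).continuousAt.comp
          (Real.continuousAt_rpow_const _ _ (Or.inl htn))
    · refine (ae_restrict_iff' measurableSet_Ioo).mpr (Filter.Eventually.of_forall ?_)
      intro t ht
      have hl := hlow t ht.1 ht.2
      have he : ‖(t : ℂ) ^ (e1 - 1)‖ = t ^ (e1.re - 1) := by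
        rw [Complex.norm_cpow_eq_rpow_re_of_pos ht.1]; simp
      unfold auxInt
      rw [aux_conv lam sig hlam p t ht.1, ← hb]
      have hpow : t ^ M = t ^ (e1.re - 1) * t ^ j := by
        rw [hM, Real.rpow_add ht.1, Real.rpow_natCast]
      rw [norm_mul, norm_mul, norm_mul, norm_mul, norm_mul, he, Complex.norm_real,
        Complex.norm_real, Real.norm_of_nonneg (Real.rpow_nonneg ht.1.le _),
        Real.norm_of_nonneg (by positivity), hpow]
      rw [norm_mul] at hl
      have hpp := Real.rpow_nonneg ht.1.le (e1.re - 1)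
      set A := ‖(1 - (t : ℂ)) ^ (e2 - 1)‖
      set B := ‖mlE lam (-q / (1 - (t : ℂ)) ^ (tau : ℂ))‖
      set U := ‖mlU lam (-p) (t ^ (-b))‖ with hU
      have hU0 : 0 ≤ U := norm_nonneg _
      calc t ^ (e1.re - 1) * t ^ j * U = 1 / c * (t ^ (e1.re - 1) * U * (c * t ^ j)) := by
            field_simp
        _ ≤ 1 / c * (t ^ (e1.re - 1) * U * (A * B)) := by gcongr
        _ = _ := by ring
  set N : ℝ := -(M + b + 1) / b with hN
  have hbad := aux_bad lam hlam (-p) s0 hs0 h N (d ^ (-b)) (by positivity)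
  apply hbad
  set Y : ℝ := d ^ (-b) with hY
  have hYpos : 0 < Y := by positivity
  set f : ℝ → ℂ := fun y => ((y ^ N : ℝ) : ℂ) * mlU lam (-p) y with hf
  have h3 : IntegrableOn ((Ioi Y).indicator f) (Ioi 0) := by
    rw [← integrableOn_Ioi_comp_rpow_iff' _ (neg_ne_zero.mpr hbpos.ne')]
    have h4 : IntegrableOn ((Ioo 0 d).indicator
        (fun t : ℝ => ((t ^ M : ℝ) : ℂ) * mlU lam (-p) (t ^ (-b)))) (Ioi 0) := by
      apply Integrable.integrableOn
      exact (integrable_indicator_iff measurableSet_Ioo).mpr hI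
    refine h4.congr_fun ?_ measurableSet_Ioi
    intro t ht
    have ht0 : 0 < t := ht
    by_cases htd : t < d
    · have hmem : t ^ (-b) ∈ Ioi Y := Real.rpow_lt_rpow_of_neg ht0 htd (by linarith)
      have hmem2 : t ∈ Ioo 0 d := ⟨ht0, htd⟩
      simp only [indicator_of_mem hmem, indicator_of_mem hmem2, hf, Complex.real_smul]
      rw [← mul_assoc, ← Complex.ofReal_mul, ← Real.rpow_mul ht0.le, ← Real.rpow_add ht0]
      congr 4
      rw [hN]; field_simp; ring
    · have hmem : t ^ (-b) ∉ Ioi Y := by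
        simp only [mem_Ioi, not_lt]
        exact Real.rpow_le_rpow_of_nonpos hd (not_lt.mp htd) (by linarith)
      have hmem2 : t ∉ Ioo 0 d := fun hh => htd hh.2
      simp only [indicator_of_notMem hmem, indicator_of_notMem hmem2, smul_zero]
  have h5 : IntegrableOn ((Ioi Y).indicator f) (Ioi Y) := h3.mono_set (Ioi_subset_Ioi hYpos.le)
  refine h5.congr_fun ?_ measurableSet_Ioi
  intro y hy
  simp only [indicator_of_mem hy]

theorem auxInt_refl (lam sig tau : ℝ) (p q e1 e2 : ℂ)
    (h : IntegrableOn (auxInt lam sig tau p q e1 e2) (Ioo 0 1)) :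
    IntegrableOn (auxInt lam tau sig q p e2 e1) (Ioo 0 1) := by
  have h1 : IntervalIntegrable (auxInt lam sig tau p q e1 e2) volume 0 1 := by
    rw [intervalIntegrable_iff_integrableOn_Ioo_of_le zero_le_one]; exact h
  have h2 := (h1.comp_sub_left 1).symm
  simp only [sub_zero, sub_self] at h2
  rw [intervalIntegrable_iff_integrableOn_Ioo_of_le zero_le_one] at h2
  refine h2.congr_fun ?_ measurableSet_Ioo
  intro t ht
  simp only [auxInt]
  push_cast
  rw [sub_sub_cancel]
  ring

theorem aux_bd (lam sig : ℝ) (hlam : 0 < lam) (hsig : 0 < sig) (p : ℂ) (a : ℝ) (ha : 0 < a)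
    (h : ∀ k : ℝ, 0 < k → k < 1 → ∃ C : ℝ, 0 ≤ C ∧ ∀ y : ℝ, 1 ≤ y →
      ‖mlU lam (-p) y‖ ≤ C * y ^ k) :
    ∃ C : ℝ, 0 ≤ C ∧ ∀ t : ℝ, 0 < t → t < 1 →
      ‖mlE lam (-p / (t : ℂ) ^ (sig : ℂ))‖ ≤ C * t ^ (-(a / 2)) := by
  have hbpos : 0 < sig / lam := by positivity
  obtain ⟨C, hC, hb⟩ := h (min (1 / 2) (a / 2 / (sig / lam))) (by positivity)
    (lt_of_le_of_lt (min_le_left _ _) (by norm_num))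
  refine ⟨C, hC, fun t ht ht1 => ?_⟩
  rw [aux_conv lam sig hlam p t ht]
  have hy : 1 ≤ t ^ (-(sig / lam)) :=
    Real.one_le_rpow_of_pos_of_le_one_of_nonpos ht ht1.le (by linarith)
  refine (hb _ hy).trans ?_
  refine mul_le_mul_of_nonneg_left ?_ hC
  rw [← Real.rpow_mul ht.le]
  apply Real.rpow_le_rpow_of_exponent_ge ht ht1.le
  have : min (1 / 2) (a / 2 / (sig / lam)) ≤ a / 2 / (sig / lam) := min_le_right _ _
  rw [le_div_iff₀ hbpos] at this
  nlinarith

theorem auxInt_good (lam sig tau : ℝ) (hlam : 0 < lam) (hsig : 0 < sig) (htau : 0 < tau)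
    (p q e1 e2 : ℂ) (he1 : 0 < e1.re) (he2 : 0 < e2.re)
    (hp : ∀ k : ℝ, 0 < k → k < 1 → ∃ C : ℝ, 0 ≤ C ∧ ∀ y : ℝ, 1 ≤ y →
      ‖mlU lam (-p) y‖ ≤ C * y ^ k)
    (hq : ∀ k : ℝ, 0 < k → k < 1 → ∃ C : ℝ, 0 ≤ C ∧ ∀ y : ℝ, 1 ≤ y →
      ‖mlU lam (-q) y‖ ≤ C * y ^ k) :
    IntegrableOn (auxInt lam sig tau p q e1 e2) (Ioo 0 1) := by
  obtain ⟨C1, hC1, hb1⟩ := aux_bd lam sig hlam hsig p e1.re he1 hp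
  obtain ⟨C2, hC2, hb2⟩ := aux_bd lam tau hlam htau q e2.re he2 hq
  have hbeta := Complex.betaIntegral_convergent (u := ((e1.re / 2 : ℝ) : ℂ))
    (v := ((e2.re / 2 : ℝ) : ℂ)) (by rw [Complex.ofReal_re]; linarith)
    (by rw [Complex.ofReal_re]; linarith)
  rw [intervalIntegrable_iff_integrableOn_Ioo_of_le zero_le_one] at hbeta
  refine Integrable.mono (Integrable.const_mul hbeta ((C1 * C2 : ℝ) : ℂ))
    ((auxInt_cont lam sig tau hlam p q e1 e2).aestronglyMeasurable measurableSet_Ioo) ?_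
  refine (ae_restrict_iff' measurableSet_Ioo).mpr (Filter.Eventually.of_forall ?_)
  intro t ht
  have ht0 := ht.1
  have ht1 : 0 < 1 - t := by linarith [ht.2]
  have hcast : (1 - (t : ℂ)) = ((1 - t : ℝ) : ℂ) := by push_cast; rfl
  have a1 := hb1 t ht.1 ht.2
  have a2 := hb2 (1 - t) ht1 (by linarith)
  rw [← hcast] at a2
  unfold auxInt
  rw [norm_mul, norm_mul, norm_mul, norm_mul, norm_mul]
  have n1 : ‖(t : ℂ) ^ (e1 - 1)‖ = t ^ (e1.re - 1) := by
    rw [Complex.norm_cpow_eq_rpow_re_of_pos ht0]; simp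
  have n2 : ‖(1 - (t : ℂ)) ^ (e2 - 1)‖ = (1 - t) ^ (e2.re - 1) := by
    rw [hcast, Complex.norm_cpow_eq_rpow_re_of_pos ht1]; simp
  have n3 : ‖(t : ℂ) ^ (((e1.re / 2 : ℝ) : ℂ) - 1)‖ = t ^ (e1.re - 1) * t ^ (-(e1.re / 2)) := by
    rw [Complex.norm_cpow_eq_rpow_re_of_pos ht0, ← Real.rpow_add ht0]
    congr 1
    rw [Complex.sub_re, Complex.ofReal_re, Complex.one_re]; ring
  have n4 : ‖(1 - (t : ℂ)) ^ (((e2.re / 2 : ℝ) : ℂ) - 1)‖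
      = (1 - t) ^ (e2.re - 1) * (1 - t) ^ (-(e2.re / 2)) := by
    rw [hcast, Complex.norm_cpow_eq_rpow_re_of_pos ht1, ← Real.rpow_add ht1]
    congr 1
    rw [Complex.sub_re, Complex.ofReal_re, Complex.one_re]; ring
  rw [n1, n2, n3, n4, Complex.norm_real, Real.norm_of_nonneg (by positivity)]
  calc _ ≤ t ^ (e1.re - 1) * (1 - t) ^ (e2.re - 1) * (C1 * t ^ (-(e1.re / 2))) *
        (C2 * (1 - t) ^ (-(e2.re / 2))) := by gcongr
    _ = _ := by ring

theorem auxInt_shift (lam sig tau : ℝ) (p q e1 e2 : ℂ) (n : ℕ) (t : ℝ) (ht : t ∈ Ioo (0:ℝ) 1) :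
    auxInt lam sig tau p q (e1 + n) (e2 + 1) t
      = auxInt lam sig tau p q e1 e2 t * ((t ^ n * (1 - t) : ℝ) : ℂ) := by
  have h1 : (t : ℂ) ≠ 0 := by exact_mod_cast ht.1.ne'
  have h2 : (1 - (t : ℂ)) ≠ 0 := by
    have : (1 - t) ≠ 0 := by linarith [ht.2]
    exact_mod_cast this
  unfold auxInt
  rw [show e1 + n - 1 = (e1 - 1) + n by ring, show e2 + 1 - 1 = (e2 - 1) + 1 by ring,
    Complex.cpow_add _ _ h1, Complex.cpow_add _ _ h2, Complex.cpow_natCast, Complex.cpow_one]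
  push_cast
  ring

theorem auxInt_sum (lam sig tau : ℝ) (p q e1 e2 : ℂ)
    (h : IntegrableOn (auxInt lam sig tau p q e1 e2) (Ioo 0 1)) :
    HasSum (fun n : ℕ => ∫ t in Ioo (0:ℝ) 1, auxInt lam sig tau p q (e1 + n) (e2 + 1) t)
      (∫ t in Ioo (0:ℝ) 1, auxInt lam sig tau p q e1 e2 t) := by
  set g := auxInt lam sig tau p q e1 e2 with hg
  have hgeo : ∀ t ∈ Ioo (0:ℝ) 1, HasSum (fun n : ℕ => t ^ n * (1 - t)) 1 := by
    intro t ht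
    have h1 := (hasSum_geometric_of_lt_one ht.1.le ht.2).mul_right (1 - t)
    rwa [inv_mul_cancel₀ (by linarith [ht.2])] at h1
  have hcongr : ∀ n : ℕ, ∫ t in Ioo (0:ℝ) 1, auxInt lam sig tau p q (e1 + n) (e2 + 1) t
      = ∫ t in Ioo (0:ℝ) 1, g t * ((t ^ n * (1 - t) : ℝ) : ℂ) := fun n =>
    setIntegral_congr_fun measurableSet_Ioo (fun t ht => auxInt_shift lam sig tau p q e1 e2 n t ht)
  simp_rw [hcongr]
  have hb : ∀ t ∈ Ioo (0:ℝ) 1, HasSum (fun n : ℕ => ‖g t‖ * (t ^ n * (1 - t))) ‖g t‖ := by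
    intro t ht
    simpa using (hgeo t ht).mul_left ‖g t‖
  refine hasSum_integral_of_dominated_convergence (fun n t => ‖g t‖ * (t ^ n * (1 - t)))
    ?_ ?_ ?_ ?_ ?_
  · intro n
    refine AEStronglyMeasurable.mul h.aestronglyMeasurable ?_
    exact Continuous.aestronglyMeasurable (by fun_prop)
  · intro n
    refine (ae_restrict_iff' measurableSet_Ioo).mpr (Filter.Eventually.of_forall ?_)
    intro t ht
    have : 0 ≤ t ^ n * (1 - t) := mul_nonneg (pow_nonneg ht.1.le _) (by linarith [ht.2])
    rw [norm_mul, Complex.norm_real, Real.norm_of_nonneg this]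
  · refine (ae_restrict_iff' measurableSet_Ioo).mpr (Filter.Eventually.of_forall ?_)
    intro t ht
    exact (hb t ht).summable
  · have h1 : IntegrableOn (fun t => ‖g t‖) (Ioo 0 1) := Integrable.norm h
    refine h1.congr_fun ?_ measurableSet_Ioo
    intro t ht
    exact (hb t ht).tsum_eq.symm
  · refine (ae_restrict_iff' measurableSet_Ioo).mpr (Filter.Eventually.of_forall ?_)
    intro t ht
    have := ((Complex.hasSum_ofReal).mpr (hgeo t ht)).mul_left (g t)
    simpa using this

theorem extBeta_infinite_summation (lam sig tau : ℝ) (hlam : 0 < lam) (hsig : 0 < sig)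
    (htau : 0 < tau) (p q e1 e2 : ℂ) (hp : 0 < p.re) (hq : 0 < q.re)
    (he1 : 0 < e1.re) (he2 : 0 < e2.re) :
    HasSum (fun n : ℕ => extBeta lam sig tau p q (e1 + n) (e2 + 1))
      (extBeta lam sig tau p q e1 e2) := by
  have hp0 : p ≠ 0 := by rintro rfl; simp at hp
  have hq0 : q ≠ 0 := by rintro rfl; simp at hq
  have hext : ∀ a b : ℂ, extBeta lam sig tau p q a b
      = ∫ t in Ioo (0:ℝ) 1, auxInt lam sig tau p q a b t := fun a b => rfl
  simp only [hext]
  have hnon : (∀ a b : ℂ, ¬ IntegrableOn (auxInt lam sig tau p q a b) (Ioo 0 1)) →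
      HasSum (fun n : ℕ => ∫ t in Ioo (0:ℝ) 1, auxInt lam sig tau p q (e1 + n) (e2 + 1) t)
      (∫ t in Ioo (0:ℝ) 1, auxInt lam sig tau p q e1 e2 t) := by
    intro hno
    have hz : ∀ a b : ℂ, ∫ t in Ioo (0:ℝ) 1, auxInt lam sig tau p q a b t = 0 :=
      fun a b => integral_undef (hno a b)
    simp only [hz]
    exact hasSum_zero
  rcases aux_dich lam hlam (-p) (neg_ne_zero.mpr hp0) with ⟨s0, hs0, hs⟩ | hgp
  · exact hnon fun a b => auxInt_bad lam sig tau hlam hsig htau p q a b hq0 s0 hs0 hs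
  rcases aux_dich lam hlam (-q) (neg_ne_zero.mpr hq0) with ⟨s0, hs0, hs⟩ | hgq
  · exact hnon fun a b hh => auxInt_bad lam tau sig hlam htau hsig q p b a hp0 s0 hs0 hs
      (auxInt_refl lam sig tau p q a b hh)
  exact auxInt_sum lam sig tau p q e1 e2
    (auxInt_good lam sig tau hlam hsig htau p q e1 e2 he1 he2 hgp hgq)
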